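/- One has (i) ∫_{ℝ³} (w_μ(z) − U_β(z)) f_β(z) dz = 0; (ii) ∫_{ℝ³} w_μ(z) f_β(z) dz = ∫_{ℝ³} U_β(z) f_β(z) dz = 8π a κ_β μ; and consequently (iii) for μ sufficiently small, | μ⁻¹ ∫_{ℝ³} U_β(z) f_β(z) dz − 8π a | ≤ C μ^{1−β̃} for a constant C depending only on a. -/

import Mathlib

open Set MeasureTheory Real

/-- The radial scattering data: the rescaled interaction `w_μ(r) = μ⁻² w(r/μ)` (given through its
radial profile `w`), its zero-energy scattering solution `j̃` in radial form, and for each `κ ≥ 1`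
the function `f̃_κ` which equals `κ j̃` on `[0, μ^β̃]` and solves
`f̃_κ'' = -½ a μ^(1-3β̃) f̃_κ` beyond `μ^β̃`. -/
structure ScatteringODE where
  a : ℝ
  beta : ℝ
  mu : ℝ
  w : ℝ → ℝ
  jt : ℝ → ℝ
  jt' : ℝ → ℝ
  ft : ℝ → ℝ → ℝ
  ft' : ℝ → ℝ → ℝ
  ha : 0 < a
  hbeta : beta ∈ Set.Ioo (1/3 : ℝ) 1
  hmu : mu ∈ Set.Ioo (0 : ℝ) 1
  hw_nonneg : ∀ r, 0 ≤ w r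
  hw_bdd : ∃ M, ∀ r, w r ≤ M
  hw_supp : ∀ r, 1 < r → w r = 0
  hjt_deriv : ∀ r, HasDerivAt jt (jt' r) r
  hjt_zero : jt 0 = 0
  hjt_ode : ∀ r ∈ Set.Ioo 0 mu, HasDerivAt jt' ((1/2) * (mu⁻¹ ^ 2 * w (r / mu)) * jt r) r
  hjt_lin : ∀ r, mu ≤ r → jt r = r - mu * a
  hjt_nonneg : ∀ r, 0 ≤ r → 0 ≤ jt r
  hjt_mono : MonotoneOn jt (Set.Ici 0)
  hjt_le : ∀ r, 0 ≤ r → jt r ≤ r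
  hft_deriv : ∀ κ r : ℝ, HasDerivAt (ft κ) (ft' κ r) r
  hft_eq : ∀ κ : ℝ, ∀ r ∈ Set.Icc (0:ℝ) (mu ^ beta), ft κ r = κ * jt r
  hft_ode : ∀ κ r : ℝ, mu ^ beta < r →
      HasDerivAt (ft' κ) (-(1/2) * a * mu ^ (1 - 3 * beta) * ft κ r) r

/-- A scattering setup together with the tangency parameter `κ_β ∈ (1, μ^β̃/(μ^β̃ - μa))` and the
minimal tangency radius `R_β ∈ (μ^β̃, ∞)` at which `f̃_{κ_β}` is tangent to the line `r ↦ r`. -/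
structure TangentScattering extends ScatteringODE where
  hsmall : mu * a < mu ^ beta
  kappa : ℝ
  Rb : ℝ
  hkappa : kappa ∈ Set.Ioo 1 (mu ^ beta / (mu ^ beta - mu * a))
  hRb : mu ^ beta < Rb
  htan_val : ft kappa Rb = Rb
  htan_der : ft' kappa Rb = 1
  hRb_min : ∀ R : ℝ, mu ^ beta < R → ft kappa R = R → ft' kappa R = 1 → Rb ≤ R

/-- The radial form `f̃` of the scattering solution `f_β`, extended by `f̃(r) = r` for `r ≥ R_β`. -/
noncomputable def TangentScattering.fext (S : TangentScattering) (r : ℝ) : ℝ :=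
  if r < S.Rb then S.ft S.kappa r else r

/-- The scattering solution `f_β(z) = f̃(|z|)/|z|` (for `z ≠ 0`). -/
noncomputable def TangentScattering.fbeta (S : TangentScattering)
    (z : EuclideanSpace ℝ (Fin 3)) : ℝ :=
  S.fext ‖z‖ / ‖z‖

/-- The scaled interaction `w_μ(z) = μ⁻² w(|z|/μ)` as a function on `ℝ³`. -/
noncomputable def ScatteringODE.wmu3 (S : ScatteringODE)
    (z : EuclideanSpace ℝ (Fin 3)) : ℝ :=
  S.mu⁻¹ ^ 2 * S.w (‖z‖ / S.mu)

/-- The auxiliary potential `U_β(z) = a μ^(1-3β̃)` for `μ^β̃ < |z| < R_β` and `0` otherwise. -/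
noncomputable def TangentScattering.Ub (S : TangentScattering)
    (z : EuclideanSpace ℝ (Fin 3)) : ℝ :=
  if S.mu ^ S.beta < ‖z‖ ∧ ‖z‖ < S.Rb then S.a * S.mu ^ (1 - 3 * S.beta) else 0

open Filter Topology in
/-- A derivative that is itself differentiable with bounded derivative on an open interval is
continuous up to the endpoints of that interval. -/
theorem continuousOn_Icc_of_hasDerivAt_of_bounded {f f' f'' : ℝ → ℝ} {lo hi K : ℝ} (hlt : lo < hi)
    (hf : ∀ x, HasDerivAt f (f' x) x) (hf' : ∀ x ∈ Ioo lo hi, HasDerivAt f' (f'' x) x)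
    (hK : ∀ x ∈ Ioo lo hi, |f'' x| ≤ K) : ContinuousOn f' (Icc lo hi) := by
  have hderiv : deriv f = f' := funext fun x => (hf x).deriv
  have hlip : LipschitzOnWith K.toNNReal f' (Ioo lo hi) :=
    (convex_Ioo lo hi).lipschitzOnWith_of_nnnorm_hasDerivWithin_le
      (fun x hx => (hf' x hx).hasDerivWithinAt) fun x hx => by
        rw [← NNReal.coe_le_coe, coe_nnnorm, Real.norm_eq_abs]
        exact (hK x hx).trans (Real.le_coe_toNNReal K)
  obtain ⟨g, hg, hfg⟩ := hlip.extend_real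
  have hdiff : DifferentiableOn ℝ f (Ioo lo hi) := fun x _ =>
    (hf x).differentiableAt.differentiableWithinAt
  have hlo : f' lo = g lo := by
    have hright : HasDerivWithinAt f (g lo) (Ici lo) lo := by
      refine hasDerivWithinAt_Ici_of_tendsto_deriv hdiff (hf lo).continuousAt.continuousWithinAt
        (Ioo_mem_nhdsGT hlt) ?_
      rw [hderiv]
      refine Tendsto.congr' ?_ (hg.continuous.continuousWithinAt (s := Ioi lo) (x := lo))
      filter_upwards [Ioo_mem_nhdsGT hlt] with x hx using (hfg hx).symm
    exact (uniqueDiffWithinAt_Ici lo).eq_deriv _ (hf lo).hasDerivWithinAt hright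
  have hhi : f' hi = g hi := by
    have hleft : HasDerivWithinAt f (g hi) (Iic hi) hi := by
      refine hasDerivWithinAt_Iic_of_tendsto_deriv hdiff (hf hi).continuousAt.continuousWithinAt
        (Ioo_mem_nhdsLT hlt) ?_
      rw [hderiv]
      refine Tendsto.congr' ?_ (hg.continuous.continuousWithinAt (s := Iio hi) (x := hi))
      filter_upwards [Ioo_mem_nhdsLT hlt] with x hx using (hfg hx).symm
    exact (uniqueDiffWithinAt_Iic hi).eq_deriv _ (hf hi).hasDerivWithinAt hleft
  refine hg.continuous.continuousOn.congr fun x hx => ?_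
  rcases eq_or_lt_of_le hx.1 with rfl | h1
  · exact hlo
  rcases eq_or_lt_of_le hx.2 with rfl | h2
  · exact hhi
  exact hfg ⟨h1, h2⟩

/-- Integration by parts for `∫ x f''(x)`, assuming only that `f''` is bounded. -/
theorem integral_id_mul_second_deriv {f f' f'' : ℝ → ℝ} {lo hi K : ℝ} (hlt : lo < hi)
    (hf : ∀ x, HasDerivAt f (f' x) x) (hf' : ∀ x ∈ Ioo lo hi, HasDerivAt f' (f'' x) x)
    (hK : ∀ x ∈ Ioo lo hi, |f'' x| ≤ K) :
    ∫ x in lo..hi, x * f'' x = (hi * f' hi - f hi) - (lo * f' lo - f lo) := by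
  have hcont := continuousOn_Icc_of_hasDerivAt_of_bounded hlt hf hf' hK
  have hint : IntervalIntegrable f'' volume lo hi := by
    rw [intervalIntegrable_iff_integrableOn_Ioo_of_le hlt.le]
    refine IntegrableOn.of_bound measure_Ioo_lt_top ?_ K ?_
    · refine (measurable_deriv f').aestronglyMeasurable.congr ?_
      filter_upwards [ae_restrict_mem measurableSet_Ioo] with x hx using (hf' x hx).deriv
    · filter_upwards [ae_restrict_mem measurableSet_Ioo] with x hx using hK x hx
  refine intervalIntegral.integral_eq_sub_of_hasDerivAt_of_le
    (f := fun x => x * f' x - f x) hlt.le ?_ (fun x hx => ?_)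
    (hint.continuousOn_mul continuousOn_id)
  · exact (continuousOn_id.mul hcont).sub fun x _ => (hf x).continuousAt.continuousWithinAt
  · convert! ((hasDerivAt_id x).mul (hf' x hx)).sub (hf x) using 1
    simp

/-- Polar coordinates in `ℝ³` for a radial function supported in a spherical shell. -/
theorem integral_radial_shell {G φ : ℝ → ℝ} {lo hi : ℝ} (h0 : 0 ≤ lo) (hle : lo ≤ hi)
    (hin : ∀ r ∈ Ioo lo hi, r ^ 2 * G r = φ r) (hout : ∀ r, 0 < r → r ∉ Icc lo hi → G r = 0) :
    ∫ z : EuclideanSpace ℝ (Fin 3), G ‖z‖ = 4 * π * ∫ r in lo..hi, φ r := by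
  have hvol : (volume : Measure (EuclideanSpace ℝ (Fin 3))).real (Metric.ball 0 1) = 4 / 3 * π := by
    rw [measureReal_def,
      InnerProductSpace.volume_ball_of_dim_odd (k := 1) (by simp)]
    simp
    rw [ENNReal.toReal_ofReal (by positivity)]
    ring
  have hset : ∫ r in Ioi (0 : ℝ), r ^ 2 * G r = ∫ r in lo..hi, φ r := by
    rw [intervalIntegral.integral_of_le hle, integral_Ioc_eq_integral_Ioo,
      setIntegral_eq_of_subset_of_ae_sdiff_eq_zero (s := Ioo lo hi)
        measurableSet_Ioi.nullMeasurableSet fun x hx => h0.trans_lt hx.1]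
    · exact setIntegral_congr_fun measurableSet_Ioo hin
    · filter_upwards [Measure.ae_ne volume lo, Measure.ae_ne volume hi] with r h1 h2 hr
      rw [hout r hr.1 fun h => hr.2 ⟨h.1.lt_of_ne' h1, h.2.lt_of_ne h2⟩, mul_zero]
  rw [integral_fun_norm_addHaar volume G, hvol]
  simp only [finrank_euclideanSpace, Fintype.card_fin, Nat.add_one_sub_one, nsmul_eq_mul,
    smul_eq_mul, Nat.cast_ofNat]
  rw [hset]
  ring

namespace ScatteringODE

theorem mu_lt_mu_rpow_beta (S : ScatteringODE) : S.mu < S.mu ^ S.beta := by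
  simpa using Real.rpow_lt_rpow_of_exponent_gt S.hmu.1 S.hmu.2 S.hbeta.2

theorem jt'_eq_one (S : ScatteringODE) {r : ℝ} (hr : S.mu ≤ r) : S.jt' r = 1 := by
  refine (uniqueDiffWithinAt_Ici r).eq_deriv _ (S.hjt_deriv r).hasDerivWithinAt ?_
  exact ((hasDerivAt_id r).sub_const (S.mu * S.a)).hasDerivWithinAt.congr
    (fun x hx => S.hjt_lin x (hr.trans hx)) (S.hjt_lin r hr)

theorem ft'_rpow_beta (S : ScatteringODE) (κ : ℝ) : S.ft' κ (S.mu ^ S.beta) = κ := by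
  have hpos : 0 < S.mu ^ S.beta := S.hmu.1.trans S.mu_lt_mu_rpow_beta
  have hleft : HasDerivWithinAt (S.ft κ) (κ * S.jt' (S.mu ^ S.beta))
      (Icc 0 (S.mu ^ S.beta)) (S.mu ^ S.beta) :=
    ((S.hjt_deriv _).const_mul κ).hasDerivWithinAt.congr (S.hft_eq κ)
      (S.hft_eq κ _ (right_mem_Icc.2 hpos.le))
  rw [(uniqueDiffOn_Icc hpos _ (right_mem_Icc.2 hpos.le)).eq_deriv _
    (S.hft_deriv κ _).hasDerivWithinAt hleft, S.jt'_eq_one S.mu_lt_mu_rpow_beta.le, mul_one]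

/-- The scattering length is smaller than the range of the interaction. -/
theorem a_lt_one (S : ScatteringODE) : S.a < 1 := by
  have hval := S.hjt_lin S.mu le_rfl
  have hnonneg := S.hjt_nonneg S.mu S.hmu.1.le
  by_contra! hge
  have hzero : S.jt S.mu = 0 := by nlinarith [S.hmu.1]
  have hmin : IsLocalMin S.jt S.mu := by
    filter_upwards [lt_mem_nhds S.hmu.1] with r hr
    rw [hzero]
    exact S.hjt_nonneg r hr.le
  have := hmin.hasDerivAt_eq_zero (S.hjt_deriv S.mu)
  rw [S.jt'_eq_one le_rfl] at this
  exact one_ne_zero this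

theorem integral_id_mul_jt'' (S : ScatteringODE) :
    ∫ r in (0 : ℝ)..S.mu, r * ((1/2) * (S.mu⁻¹ ^ 2 * S.w (r / S.mu)) * S.jt r) = S.mu * S.a := by
  obtain ⟨M, hM⟩ := S.hw_bdd
  have hmu := S.hmu.1
  rw [integral_id_mul_second_deriv (K := (1/2) * (S.mu⁻¹ ^ 2 * M) * S.mu) hmu S.hjt_deriv S.hjt_ode,
    S.jt'_eq_one le_rfl, S.hjt_lin S.mu le_rfl, S.hjt_zero]
  · ring
  · intro r hr
    have hj := S.hjt_nonneg r hr.1.le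
    have hw := S.hw_nonneg (r / S.mu)
    rw [abs_of_nonneg (by positivity)]
    have hM0 := hw.trans (hM _)
    have := (S.hjt_le r hr.1.le).trans hr.2.le
    have := hM (r / S.mu)
    gcongr

end ScatteringODE

namespace TangentScattering

theorem integral_wmu3_mul_fbeta (S : TangentScattering) :
    ∫ z, S.wmu3 z * S.fbeta z = 8 * π * S.a * S.kappa * S.mu := by
  have hmu := S.hmu.1
  refine (integral_radial_shell
    (G := fun r => S.mu⁻¹ ^ 2 * S.w (r / S.mu) * (S.fext r / r))
    (φ := fun r => 2 * S.kappa *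
      (r * ((1/2) * (S.mu⁻¹ ^ 2 * S.w (r / S.mu)) * S.jt r)))
    le_rfl hmu.le (fun r hr => ?_) fun r h0 hr => ?_).trans ?_
  · have hle := hr.2.trans S.mu_lt_mu_rpow_beta
    have hr0 := hr.1.ne'
    simp only [fext, if_pos (hle.trans S.hRb), S.hft_eq S.kappa r ⟨hr.1.le, hle.le⟩]
    field_simp
  · have : S.mu < r := by
      by_contra! h
      exact hr ⟨h0.le, h⟩
    simp [S.hw_supp (r / S.mu) ((one_lt_div hmu).2 this)]
  · rw [intervalIntegral.integral_const_mul, S.integral_id_mul_jt'']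
    ring

theorem integral_Ub_mul_fbeta (S : TangentScattering) :
    ∫ z, S.Ub z * S.fbeta z = 8 * π * S.a * S.kappa * S.mu := by
  have hpos : 0 < S.mu ^ S.beta := S.hmu.1.trans S.mu_lt_mu_rpow_beta
  refine (integral_radial_shell
    (G := fun r => (if S.mu ^ S.beta < r ∧ r < S.Rb then S.a * S.mu ^ (1 - 3 * S.beta) else 0) *
      (S.fext r / r))
    (φ := fun r => -2 *
      (r * (-(1/2) * S.a * S.mu ^ (1 - 3 * S.beta) * S.ft S.kappa r)))
    hpos.le S.hRb.le (fun r hr => ?_) fun r h0 hr => ?_).trans ?_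
  · have hr0 := (hpos.trans hr.1).ne'
    simp only [fext, if_pos hr.2, if_pos (show S.mu ^ S.beta < r ∧ r < S.Rb from hr)]
    field_simp
  · rw [if_neg fun h => hr ⟨h.1.le, h.2.le⟩, zero_mul]
  · have hcont : Continuous (S.ft S.kappa) :=
      continuous_iff_continuousAt.2 fun r => (S.hft_deriv S.kappa r).continuousAt
    obtain ⟨K, hK⟩ := (isCompact_Icc (a := S.mu ^ S.beta) (b := S.Rb)).exists_bound_of_continuousOn
      (hcont.const_mul (-(1/2) * S.a * S.mu ^ (1 - 3 * S.beta))).continuousOn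
    rw [intervalIntegral.integral_const_mul, integral_id_mul_second_deriv S.hRb
      (S.hft_deriv S.kappa) (fun r hr => S.hft_ode S.kappa r hr.1)
      (fun r hr => hK r (Ioo_subset_Icc_self hr)), S.htan_val, S.htan_der, S.ft'_rpow_beta,
      S.hft_eq S.kappa _ (right_mem_Icc.2 hpos.le), S.hjt_lin _ S.mu_lt_mu_rpow_beta.le]
    ring

theorem kappa_sub_one_le (S : TangentScattering) :
    S.kappa - 1 ≤ S.a / (1 - S.a) * S.mu ^ (1 - S.beta) := by
  have hmu := S.hmu.1
  have ha := S.ha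
  have ha1 := S.a_lt_one
  have hb : 0 < S.mu ^ S.beta := S.hmu.1.trans S.mu_lt_mu_rpow_beta
  have hx : S.mu ^ (1 - S.beta) = S.mu / S.mu ^ S.beta := by
    rw [Real.rpow_sub hmu, Real.rpow_one]
  have hden : 0 < S.mu ^ S.beta - S.mu * S.a := sub_pos.2 S.hsmall
  have hden' : 0 < S.mu ^ S.beta * (1 - S.a) := mul_pos hb (by linarith)
  calc S.kappa - 1 ≤ S.mu ^ S.beta / (S.mu ^ S.beta - S.mu * S.a) - 1 := by
        linarith [S.hkappa.2]
    _ = S.mu * S.a / (S.mu ^ S.beta - S.mu * S.a) := by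
        field_simp
        ring
    _ ≤ S.mu * S.a / (S.mu ^ S.beta * (1 - S.a)) := by
        refine div_le_div_of_nonneg_left (by positivity) hden' ?_
        nlinarith [S.mu_lt_mu_rpow_beta]
    _ = S.a / (1 - S.a) * S.mu ^ (1 - S.beta) := by
        have : 1 - S.a ≠ 0 := by linarith
        rw [hx]
        field_simp

end TangentScattering

/-- (i) `∫ (w_μ - U_β) f_β = 0`; (ii) `∫ w_μ f_β = ∫ U_β f_β = 8π a κ_β μ`; (iii) for `μ`
sufficiently small, `|μ⁻¹ ∫ U_β f_β - 8π a| ≤ C μ^(1-β̃)` with `C` depending only on `a`. -/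
theorem scattering_length_identities (a : ℝ) (ha : 0 < a) :
    ∃ C > (0:ℝ), ∃ μ₀ > (0:ℝ),
      ∀ S : TangentScattering, S.a = a →
        ((∫ z : EuclideanSpace ℝ (Fin 3), (S.wmu3 z - S.Ub z) * S.fbeta z) = 0 ∧
          (∫ z : EuclideanSpace ℝ (Fin 3), S.wmu3 z * S.fbeta z) = 8 * π * a * S.kappa * S.mu ∧
          (∫ z : EuclideanSpace ℝ (Fin 3), S.Ub z * S.fbeta z) = 8 * π * a * S.kappa * S.mu) ∧
        (S.mu ≤ μ₀ →
          |S.mu⁻¹ * (∫ z : EuclideanSpace ℝ (Fin 3), S.Ub z * S.fbeta z) - 8 * π * a| ≤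
            C * S.mu ^ (1 - S.beta)) := by
  refine ⟨8 * π * a * (a / |1 - a|) + 1, by positivity, 1, one_pos, ?_⟩
  rintro S rfl
  have hmu := S.hmu.1
  have hkappa := S.hkappa.1
  have hW := S.integral_wmu3_mul_fbeta
  have hU := S.integral_Ub_mul_fbeta
  have hne : 8 * π * S.a * S.kappa * S.mu ≠ 0 := by positivity
  refine ⟨⟨?_, hW, hU⟩, fun _ => ?_⟩
  · simp_rw [sub_mul]
    rw [integral_sub (.of_integral_ne_zero (hW ▸ hne)) (.of_integral_ne_zero (hU ▸ hne)), hW, hU,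
      sub_self]
  · have hpow : 0 < S.mu ^ (1 - S.beta) := Real.rpow_pos_of_pos hmu _
    have hrew : S.mu⁻¹ * (8 * π * S.a * S.kappa * S.mu) - 8 * π * S.a =
        8 * π * S.a * (S.kappa - 1) := by
      field_simp
    rw [hU, hrew, abs_of_nonneg (mul_nonneg (by positivity) (by linarith)),
      abs_of_pos (sub_pos.2 S.a_lt_one)]
    have := mul_le_mul_of_nonneg_left S.kappa_sub_one_le
      (show 0 ≤ 8 * π * S.a by positivity)
    nlinarith
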